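/- Smooth functions u,v: ℝ² → ℝ (variables x,t) satisfy the Drinfeld–Sokolov system u_t = u_{xxx} − 6uu_x − 6v_x, v_t = −2v_{xxx} + 6uv_x if and only if for every time t, every smooth ψ: ℝ → ℝ and every x ∈ ℝ one has −2u_t ψ'' − 2u_{xt} ψ' + (−u_{xxt} + 2u u_t + v_t)ψ = A(Lψ) − L(Aψ) at (x,t), where L and A are the x-differential operators (coefficients frozen at time t) Lψ = ψ'''' − 2uψ'' − 2u_xψ' + (−u_{xx} + u² + v)ψ and Aψ = 4ψ''' − 6uψ' − 3u_xψ. -/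

import Mathlib

/-!
Every derivative identity in `x` is an identity between differential polynomials. The commutator
`[A, L]` is therefore computed once, in an arbitrary commutative ring with a derivation
(`commutator_identity`): it is the operator `-2 W D² - 2 W' D + (-W'' + 2 u W + Z)` with
`W = u''' - 6 u u' - 6 v'` and `Z = -2 v''' + 6 u v'`. Specialising to the algebra of smooth
functions on the line gives `commutator_apply`.

Since mixed partial derivatives of smooth functions commute (`pdt_pdx_comm`), the left-hand side of
the Lax equation is the same operator with `u_t`, `v_t` in place of `W`, `Z`. So the system implies
the Lax equation. Conversely, testing with `ψ(y) = (y - x)²` isolates the coefficient of `D²` at `x`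
and gives `u_t = W`; then `ψ = 1` isolates the coefficient of `D⁰`, which reduces to `v_t = Z`.
-/

noncomputable section

/-- Partial derivative in the first variable (x). -/
def pdx (f : ℝ → ℝ → ℝ) : ℝ → ℝ → ℝ := fun x t => deriv (fun x' => f x' t) x

/-- Partial derivative in the second variable (t). -/
def pdt (f : ℝ → ℝ → ℝ) : ℝ → ℝ → ℝ := fun x t => deriv (fun t' => f x t') t

/-- The DS-III Lax operator `L = (D² - u)² + v
  = D⁴ - 2uD² - 2u_xD + (-u_{xx} + u² + v)` with coefficients `u v : ℝ → ℝ`. -/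
def LDS (u v ψ : ℝ → ℝ) : ℝ → ℝ := fun x =>
  deriv^[4] ψ x - 2 * u x * deriv^[2] ψ x - 2 * deriv u x * deriv ψ x
    + (-deriv^[2] u x + u x ^ 2 + v x) * ψ x

/-- The operator `A = 4D³ - 6uD - 3u_x`. -/
def ADS (u ψ : ℝ → ℝ) : ℝ → ℝ := fun x =>
  4 * deriv^[3] ψ x - 6 * u x * deriv ψ x - 3 * deriv u x * ψ x

/-- The commutator of `A = 4D³ - 6uD - 3u'` and `L = D⁴ - 2uD² - 2u'D + (-u'' + u² + v)` in a
differential ring: all terms of order above two cancel. -/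
lemma commutator_identity {R : Type*} [CommRing R] [Algebra ℝ R] (D : Derivation ℝ R R)
    (u v p l a w : R)
    (hl : l = D (D (D (D p))) - 2 * u * D (D p) - 2 * D u * D p + (-D (D u) + u ^ 2 + v) * p)
    (ha : a = 4 * D (D (D p)) - 6 * u * D p - 3 * D u * p)
    (hw : w = D (D (D u)) - 6 * u * D u - 6 * D v) :
    (4 * D (D (D l)) - 6 * u * D l - 3 * D u * l)
      - (D (D (D (D a))) - 2 * u * D (D a) - 2 * D u * D a + (-D (D u) + u ^ 2 + v) * a)
    = -2 * w * D (D p) - 2 * D w * D p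
      + (-D (D w) + 2 * u * w + (-2 * D (D (D v)) + 6 * u * D v)) * p := by
  have h2 : D 2 = 0 := by exact_mod_cast D.map_natCast 2
  have h3 : D 3 = 0 := by exact_mod_cast D.map_natCast 3
  have h4 : D 4 = 0 := by exact_mod_cast D.map_natCast 4
  have h6 : D 6 = 0 := by exact_mod_cast D.map_natCast 6
  subst hl ha hw
  simp only [map_add, map_sub, map_neg, Derivation.leibniz, smul_eq_mul, pow_two, h2, h3, h4, h6,
    mul_zero, add_zero]
  ring

/-- The algebra of smooth real functions on the line. -/
def smoothAlg : Subalgebra ℝ (ℝ → ℝ) where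
  carrier := {f | ContDiff ℝ (⊤ : ℕ∞) f}
  mul_mem' hf hg := (Set.mem_ofPred_eq.mp hf).mul (Set.mem_ofPred_eq.mp hg)
  add_mem' hf hg := (Set.mem_ofPred_eq.mp hf).add (Set.mem_ofPred_eq.mp hg)
  algebraMap_mem' c := (contDiff_const : ContDiff ℝ (⊤ : ℕ∞) fun _ : ℝ => c)

lemma contDiff_deriv {f : ℝ → ℝ} (hf : ContDiff ℝ (⊤ : ℕ∞) f) :
    ContDiff ℝ (⊤ : ℕ∞) (deriv f) :=
  (contDiff_infty_iff_deriv.1 hf).2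

lemma smoothAlg_differentiable (f : smoothAlg) : Differentiable ℝ (f : ℝ → ℝ) :=
  (contDiff_infty_iff_deriv.1 f.2).1

/-- Differentiation as a derivation of the algebra of smooth functions. -/
def smoothD : Derivation ℝ smoothAlg smoothAlg :=
  Derivation.mk'
    { toFun := fun f => ⟨deriv f, contDiff_deriv f.2⟩
      map_add' := fun f g => Subtype.ext <| funext fun x =>
        deriv_add (smoothAlg_differentiable f x) (smoothAlg_differentiable g x)
      map_smul' := fun c f => Subtype.ext <| funext fun x =>
        deriv_const_smul c (smoothAlg_differentiable f x) }
    (fun f g => Subtype.ext <| funext fun x => by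
      have h := deriv_mul (smoothAlg_differentiable f x) (smoothAlg_differentiable g x)
      change deriv ((f : ℝ → ℝ) * (g : ℝ → ℝ)) x = (f : ℝ → ℝ) x * deriv g x + (g : ℝ → ℝ) x * deriv f x
      rw [h]; ring)

/-- The first component of DS-III: the prescribed value of `u_t`. -/
def flowU (u v : ℝ → ℝ) : ℝ → ℝ := fun x =>
  deriv^[3] u x - 6 * u x * deriv u x - 6 * deriv v x

lemma commutator_apply {u v p : ℝ → ℝ} (hu : ContDiff ℝ (⊤ : ℕ∞) u)
    (hv : ContDiff ℝ (⊤ : ℕ∞) v) (hp : ContDiff ℝ (⊤ : ℕ∞) p) (x : ℝ) :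
    ADS u (LDS u v p) x - LDS u v (ADS u p) x
    = -2 * flowU u v x * deriv^[2] p x - 2 * deriv (flowU u v) x * deriv p x
      + (-deriv^[2] (flowU u v) x + 2 * u x * flowU u v x
        + (-2 * deriv^[3] v x + 6 * u x * deriv v x)) * p x := by
  have h := commutator_identity smoothD ⟨u, hu⟩ ⟨v, hv⟩ ⟨p, hp⟩ _ _ _ rfl rfl rfl
  exact congrFun (congrArg Subtype.val h) x

lemma pdx_eq_fderiv {f : ℝ → ℝ → ℝ} (hf : Differentiable ℝ (Function.uncurry f)) (x t : ℝ) :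
    pdx f x t = fderiv ℝ (Function.uncurry f) (x, t) (1, 0) := by
  have h : HasDerivAt (fun y : ℝ => (y, t)) ((1 : ℝ), (0 : ℝ)) x :=
    (hasDerivAt_id x).prodMk (hasDerivAt_const x t)
  exact ((hf (x, t)).hasFDerivAt.comp_hasDerivAt x h).deriv

lemma pdt_eq_fderiv {f : ℝ → ℝ → ℝ} (hf : Differentiable ℝ (Function.uncurry f)) (x t : ℝ) :
    pdt f x t = fderiv ℝ (Function.uncurry f) (x, t) (0, 1) := by
  have h : HasDerivAt (fun s : ℝ => (x, s)) ((0 : ℝ), (1 : ℝ)) t :=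
    (hasDerivAt_const t x).prodMk (hasDerivAt_id t)
  exact ((hf (x, t)).hasFDerivAt.comp_hasDerivAt t h).deriv

lemma uncurry_pdx {f : ℝ → ℝ → ℝ} (hf : Differentiable ℝ (Function.uncurry f)) :
    Function.uncurry (pdx f) = fun q => fderiv ℝ (Function.uncurry f) q (1, 0) :=
  funext fun q => pdx_eq_fderiv hf q.1 q.2

lemma uncurry_pdt {f : ℝ → ℝ → ℝ} (hf : Differentiable ℝ (Function.uncurry f)) :
    Function.uncurry (pdt f) = fun q => fderiv ℝ (Function.uncurry f) q (0, 1) :=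
  funext fun q => pdt_eq_fderiv hf q.1 q.2

lemma contDiff_pdx {f : ℝ → ℝ → ℝ} (hf : ContDiff ℝ (⊤ : ℕ∞) (Function.uncurry f)) :
    ContDiff ℝ (⊤ : ℕ∞) (Function.uncurry (pdx f)) := by
  rw [uncurry_pdx (hf.differentiable (by simp))]
  exact (hf.fderiv_right (m := (⊤ : ℕ∞)) (by simp)).clm_apply contDiff_const

lemma pdt_pdx_comm {f : ℝ → ℝ → ℝ} (hf : ContDiff ℝ (⊤ : ℕ∞) (Function.uncurry f)) :
    pdt (pdx f) = pdx (pdt f) := by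
  have hd : Differentiable ℝ (Function.uncurry f) := hf.differentiable (by simp)
  have hF : ContDiff ℝ (⊤ : ℕ∞) (fderiv ℝ (Function.uncurry f)) :=
    hf.fderiv_right (by simp)
  have hFd : Differentiable ℝ (fderiv ℝ (Function.uncurry f)) := hF.differentiable (by simp)
  have key (a : ℝ × ℝ) : Differentiable ℝ (fun q => fderiv ℝ (Function.uncurry f) q a) :=
    fun q => (hFd q).clm_apply (differentiableAt_const a)
  have key2 (a b q : ℝ × ℝ) : fderiv ℝ (fun q => fderiv ℝ (Function.uncurry f) q a) q b
      = fderiv ℝ (fderiv ℝ (Function.uncurry f)) q b a := by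
    rw [fderiv_clm_apply (hFd q) (differentiableAt_const a)]
    simp
  funext x t
  rw [pdt_eq_fderiv (by rw [uncurry_pdx hd]; exact key _),
    pdx_eq_fderiv (by rw [uncurry_pdt hd]; exact key _),
    uncurry_pdx hd, uncurry_pdt hd, key2, key2]
  exact (hf.contDiffAt.isSymmSndFDerivAt (by
    rw [minSmoothness_of_isRCLikeNormedField]
    exact WithTop.coe_le_coe.2 le_top)) _ _

theorem stmt12 (u v : ℝ → ℝ → ℝ)
    (hu : ContDiff ℝ (⊤ : ℕ∞) (Function.uncurry u))
    (hv : ContDiff ℝ (⊤ : ℕ∞) (Function.uncurry v)) :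
    ((∀ x t, pdt u x t = pdx (pdx (pdx u)) x t - 6 * u x t * pdx u x t - 6 * pdx v x t) ∧
     (∀ x t, pdt v x t = -2 * pdx (pdx (pdx v)) x t + 6 * u x t * pdx v x t)) ↔
    (∀ (t : ℝ) (ψ : ℝ → ℝ), ContDiff ℝ (⊤ : ℕ∞) ψ → ∀ x : ℝ,
      -2 * pdt u x t * deriv^[2] ψ x - 2 * pdt (pdx u) x t * deriv ψ x
        + (-pdt (pdx (pdx u)) x t + 2 * u x t * pdt u x t + pdt v x t) * ψ x =
      ADS (fun y => u y t) (LDS (fun y => u y t) (fun y => v y t) ψ) x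
        - LDS (fun y => u y t) (fun y => v y t) (ADS (fun y => u y t) ψ) x) := by
  have hut (t : ℝ) : ContDiff ℝ (⊤ : ℕ∞) (fun y => u y t) :=
    hu.comp (contDiff_id.prodMk contDiff_const)
  have hvt (t : ℝ) : ContDiff ℝ (⊤ : ℕ∞) (fun y => v y t) :=
    hv.comp (contDiff_id.prodMk contDiff_const)
  have hx : pdt (pdx u) = pdx (pdt u) := pdt_pdx_comm hu
  have hxx : pdt (pdx (pdx u)) = pdx (pdx (pdt u)) := by
    rw [pdt_pdx_comm (contDiff_pdx hu), hx]
  -- Once `u_t` agrees with the flow, so do its `x`-derivatives.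
  have hflow (h : ∀ x t, pdt u x t = pdx (pdx (pdx u)) x t - 6 * u x t * pdx u x t
      - 6 * pdx v x t) (x t : ℝ) :
      pdt u x t = flowU (fun y => u y t) (fun y => v y t) x ∧
      pdt (pdx u) x t = deriv (flowU (fun y => u y t) (fun y => v y t)) x ∧
      pdt (pdx (pdx u)) x t = deriv^[2] (flowU (fun y => u y t) (fun y => v y t)) x := by
    have h' : pdt u = fun x t => flowU (fun y => u y t) (fun y => v y t) x :=
      funext fun x => funext fun t => h x t
    rw [hx, hxx, h']
    exact ⟨rfl, rfl, rfl⟩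
  constructor
  · rintro ⟨h1, h2⟩ t ψ hψ x
    obtain ⟨e0, e1, e2⟩ := hflow h1 x t
    rw [commutator_apply (hut t) (hvt t) hψ, e0, e1, e2, h2 x t]
    rfl
  · intro h
    have h1 : ∀ x t, pdt u x t = pdx (pdx (pdx u)) x t - 6 * u x t * pdx u x t
        - 6 * pdx v x t := by
      intro x t
      have hψ : ContDiff ℝ (⊤ : ℕ∞) (fun y : ℝ => (y - x) ^ 2) := by fun_prop
      have d1 : deriv (fun y : ℝ => (y - x) ^ 2) = fun y => 2 * (y - x) := by
        funext y
        simp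
      have d2 : deriv^[2] (fun y : ℝ => (y - x) ^ 2) x = 2 := by
        change deriv (deriv (fun y : ℝ => (y - x) ^ 2)) x = 2
        rw [d1]
        simp
      have key := h t _ hψ x
      rw [commutator_apply (hut t) (hvt t) hψ, d2, d1] at key
      have : pdt u x t = flowU (fun y => u y t) (fun y => v y t) x := by
        simp only [sub_self] at key
        linarith
      exact this
    refine ⟨h1, fun x t => ?_⟩
    obtain ⟨e0, e1, e2⟩ := hflow h1 x t
    have hψ : ContDiff ℝ (⊤ : ℕ∞) (fun _ : ℝ => (1 : ℝ)) := contDiff_const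
    have d1 : deriv (fun _ : ℝ => (1 : ℝ)) = fun _ => 0 := by
      funext y; simp
    have d2 : deriv^[2] (fun _ : ℝ => (1 : ℝ)) x = 0 := by
      change deriv (deriv (fun _ : ℝ => (1 : ℝ))) x = 0
      rw [d1]; simp
    have key := h t _ hψ x
    rw [commutator_apply (hut t) (hvt t) hψ, d2, d1, e0, e1, e2] at key
    have : pdt v x t = -2 * deriv^[3] (fun y => v y t) x
        + 6 * u x t * deriv (fun y => v y t) x := by
      linarith
    exact this
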